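/- The relation lifting of the presheaf construction L is given by the following formula: for a module R: A ⇸ B between V-categories over a commutative quantale V with collage Coll R and inclusions i0: B → Coll R, i1: A → Coll R, and for every presheaf F on A and every presheaf G on B, the hom in the presheaf V-category L(Coll R) satisfies L(Coll R)(L i0 G, L i1 F) = ⋀_b [ G b, ⋁_a R(b,a) ⊗ F a ], i.e. ⋀_{x ∈ Coll R} [ ⋁_b G b ⊗ Coll R(x, i0 b), ⋁_a F a ⊗ Coll R(x, i1 a) ] = ⋀_b [ G b, ⋁_a R(b,a) ⊗ F a ]. -/

import Mathlib

/-!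
`L i₀ G` is the presheaf on `Coll R` freely generated by the family `G` along `i₀`, so mapping out
of it into a presheaf `H` is mapping `G` into the restriction `H ∘ i₀`; this is the Yoneda lemma
together with the fact that `[-, z]` turns suprema into infima. For `H = L i₁ F`, the restriction
at `b` is `⋁_a F a ⊗ Coll R(i₀ b, i₁ a) = ⋁_a F a ⊗ R(b, a)`.
-/

universe u v w

/-- A category enriched in a commutative quantale `V`:
objects together with `V`-valued homs satisfying the identity and composition axioms. -/
structure VCategory (V : Type u) [CompleteLattice V] [CommMonoid V] where
  Obj : Type v
  hom : Obj → Obj → V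
  one_le_hom : ∀ a, (1 : V) ≤ hom a a
  comp_le : ∀ a b c, hom b c * hom a b ≤ hom a c

/-- A `V`-functor is an object assignment which is (hom-)expanding. -/
def IsVFunctor {V : Type u} [CompleteLattice V] [CommMonoid V]
    (A : VCategory.{u, v} V) (B : VCategory.{u, w} V) (f : A.Obj → B.Obj) : Prop :=
  ∀ a a', A.hom a a' ≤ B.hom (f a) (f a')

/-- A module `R : A ⇸ B`. -/
def IsModule {V : Type u} [CompleteLattice V] [CommMonoid V]
    (A : VCategory.{u, v} V) (B : VCategory.{u, w} V) (R : B.Obj → A.Obj → V) : Prop :=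
  ∀ (a a' : A.Obj) (b b' : B.Obj), B.hom b' b * R b a * A.hom a a' ≤ R b' a'

/-- The internal hom of the quantale: `[x,y] = ⋁ {z | x ⊗ z ≤ y}`. -/
def ihom {V : Type u} [CompleteLattice V] [CommMonoid V] (x y : V) : V :=
  sSup {z | x * z ≤ y}

/-- A presheaf on `A`. -/
def IsPresheaf {V : Type u} [CompleteLattice V] [CommMonoid V]
    (A : VCategory.{u, v} V) (F : A.Obj → V) : Prop :=
  ∀ a a', F a * A.hom a' a ≤ F a'

/-- The hom function of the collage of a module `R : A ⇸ B`: objects are the disjoint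
union of the objects of `B` (left) and of `A` (right). -/
def collHom {V : Type u} [CompleteLattice V] [CommMonoid V]
    (A B : VCategory.{u, v} V) (R : B.Obj → A.Obj → V) :
    B.Obj ⊕ A.Obj → B.Obj ⊕ A.Obj → V
  | Sum.inl b, Sum.inl b' => B.hom b b'
  | Sum.inl b, Sum.inr a => R b a
  | Sum.inr _, Sum.inl _ => ⊥
  | Sum.inr a, Sum.inr a' => A.hom a a'

section InternalHom

variable {V : Type u} [CompleteLattice V] [CommMonoid V] [IsQuantale V]

theorem le_ihom_iff {x y z : V} : z ≤ ihom x y ↔ x * z ≤ y :=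
  Quantale.rightMulResiduation_le_iff_mul_le

theorem mul_ihom_le (x y : V) : x * ihom x y ≤ y :=
  le_ihom_iff.mp le_rfl

theorem ihom_le_of_one_le {x : V} (hx : 1 ≤ x) (y : V) : ihom x y ≤ y :=
  (le_mul_of_one_le_left' hx).trans (mul_ihom_le x y)

theorem ihom_mul (x y z : V) : ihom (x * y) z = ihom x (ihom y z) :=
  eq_of_forall_le_iff fun w => by
    rw [le_ihom_iff, le_ihom_iff, le_ihom_iff, mul_comm x y, mul_assoc]

theorem ihom_iSup {ι : Type*} (x : ι → V) (y : V) : ihom (⨆ i, x i) y = ⨅ i, ihom (x i) y :=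
  eq_of_forall_le_iff fun w => by
    simp only [le_iInf_iff, le_ihom_iff, Quantale.iSup_mul_distrib, iSup_le_iff]

theorem ihom_iInf {ι : Sort*} (x : V) (y : ι → V) : ihom x (⨅ i, y i) = ⨅ i, ihom x (y i) :=
  eq_of_forall_le_iff fun w => by
    simp only [le_iInf_iff, le_ihom_iff]

end InternalHom

namespace VCategory

variable {V : Type u} [CompleteLattice V] [CommMonoid V] (C : VCategory.{u, v} V)

/-- The hom `L C (F, G)` of the presheaf `V`-category, defined for arbitrary families `F` and `G`
of elements of `V`. -/
def presheafHom (F G : C.Obj → V) : V :=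
  ⨅ c, ihom (F c) (G c)

/-- The presheaf `L f F` on `C`, i.e. the left Kan extension of `F` along `f`. The domain of `f`
is a bare type, whose elements `F` weights freely. -/
def presheafMap {ι : Type*} (f : ι → C.Obj) (F : ι → V) (c : C.Obj) : V :=
  ⨆ i, F i * C.hom c (f i)

variable {C} [IsQuantale V]

theorem isPresheaf_presheafMap {ι : Type*} (f : ι → C.Obj) (F : ι → V) :
    IsPresheaf C (C.presheafMap f F) := by
  intro c c'
  calc (⨆ i, F i * C.hom c (f i)) * C.hom c' c
      = ⨆ i, F i * (C.hom c (f i) * C.hom c' c) := by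
        simp only [Quantale.iSup_mul_distrib, mul_assoc]
    _ ≤ ⨆ i, F i * C.hom c' (f i) :=
        iSup_mono fun i => mul_le_mul_right (C.comp_le c' c (f i)) (F i)

theorem presheafHom_yoneda {H : C.Obj → V} (hH : IsPresheaf C H) (c : C.Obj) :
    C.presheafHom (fun x => C.hom x c) H = H c := by
  apply le_antisymm
  · exact iInf_le_of_le c (ihom_le_of_one_le (C.one_le_hom c) (H c))
  · exact le_iInf fun x => le_ihom_iff.mpr (mul_comm (H c) _ ▸ hH c x)

theorem presheafHom_presheafMap {ι : Type*} (f : ι → C.Obj) (F : ι → V) {H : C.Obj → V}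
    (hH : IsPresheaf C H) :
    C.presheafHom (C.presheafMap f F) H = ⨅ i, ihom (F i) (H (f i)) :=
  calc C.presheafHom (C.presheafMap f F) H
      = ⨅ x, ⨅ i, ihom (F i) (ihom (C.hom x (f i)) (H x)) := by
        simp only [presheafHom, presheafMap, ihom_iSup, ihom_mul]
    _ = ⨅ i, ihom (F i) (C.presheafHom (fun x => C.hom x (f i)) H) := by
        simp only [presheafHom, ihom_iInf]
        exact iInf_comm
    _ = ⨅ i, ihom (F i) (H (f i)) := by
        simp only [presheafHom_yoneda hH]

end VCategory

section Collage

variable {V : Type u} [CompleteLattice V] [CommMonoid V] [IsQuantale V]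

theorem IsModule.hom_mul_le {A : VCategory.{u, v} V} {B : VCategory.{u, w} V}
    {R : B.Obj → A.Obj → V} (hR : IsModule A B R) (a : A.Obj) (b b' : B.Obj) :
    B.hom b' b * R b a ≤ R b' a :=
  (le_mul_of_one_le_right' (A.one_le_hom a)).trans (hR a a b b')

theorem IsModule.mul_hom_le {A : VCategory.{u, v} V} {B : VCategory.{u, w} V}
    {R : B.Obj → A.Obj → V} (hR : IsModule A B R) (a a' : A.Obj) (b : B.Obj) :
    R b a * A.hom a a' ≤ R b a' :=
  (mul_le_mul_left (le_mul_of_one_le_left' (B.one_le_hom b)) _).trans (hR a a' b b)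

variable {A B : VCategory.{u, v} V} {R : B.Obj → A.Obj → V}

theorem IsModule.collHom_comp_le (hR : IsModule A B R) (x y z : B.Obj ⊕ A.Obj) :
    collHom A B R y z * collHom A B R x y ≤ collHom A B R x z := by
  rcases x with b | a <;> rcases y with b' | a' <;> rcases z with b'' | a'' <;>
    simp only [collHom, Quantale.bot_mul, Quantale.mul_bot, bot_le]
  case inl.inl.inl => exact B.comp_le b b' b''
  case inl.inl.inr => exact mul_comm (R b' a'') _ ▸ hR.hom_mul_le a'' b' b
  case inl.inr.inr => exact mul_comm (R b a') _ ▸ hR.mul_hom_le a' a'' b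
  case inr.inr.inr => exact A.comp_le a a' a''

/-- The collage `Coll R` of a module `R : A ⇸ B`. -/
def IsModule.collage (hR : IsModule A B R) : VCategory.{u, v} V where
  Obj := B.Obj ⊕ A.Obj
  hom := collHom A B R
  one_le_hom := Sum.rec B.one_le_hom A.one_le_hom
  comp_le := hR.collHom_comp_le

/-- The inclusion `i₀ : B → Coll R`, on objects. -/
def IsModule.collageInl (hR : IsModule A B R) : B.Obj → hR.collage.Obj :=
  Sum.inl

/-- The inclusion `i₁ : A → Coll R`, on objects. -/
def IsModule.collageInr (hR : IsModule A B R) : A.Obj → hR.collage.Obj :=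
  Sum.inr

theorem IsModule.presheafMap_collageInr_collageInl (hR : IsModule A B R) (F : A.Obj → V)
    (b : B.Obj) :
    hR.collage.presheafMap hR.collageInr F (hR.collageInl b) = ⨆ a, R b a * F a :=
  iSup_congr fun a => mul_comm (F a) (R b a)

theorem presheaf_relation_lifting_general (hR : IsModule A B R) (F : A.Obj → V) (G : B.Obj → V) :
    hR.collage.presheafHom (hR.collage.presheafMap hR.collageInl G)
        (hR.collage.presheafMap hR.collageInr F) =
      ⨅ b, ihom (G b) (⨆ a, R b a * F a) := by
  rw [VCategory.presheafHom_presheafMap _ _ (VCategory.isPresheaf_presheafMap _ F)]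
  simp only [hR.presheafMap_collageInr_collageInl]

end Collage

theorem isQuantale_of_mul_sSup {V : Type u} [CompleteLattice V] [CommSemigroup V]
    (hV : ∀ (x : V) (s : Set V), x * sSup s = ⨆ y ∈ s, x * y) : IsQuantale V where
  mul_sSup_distrib := hV
  sSup_mul_distrib s y := by simpa only [mul_comm] using hV y s

/-- The relation lifting of the presheaf construction computed on a module via its
collage. -/
theorem presheaf_relation_lifting {V : Type u} [CompleteLattice V] [CommMonoid V]
    (hV : ∀ (x : V) (s : Set V), x * sSup s = ⨆ y ∈ s, x * y)
    (A B : VCategory.{u, v} V)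
    (R : B.Obj → A.Obj → V) (hR : IsModule A B R)
    (F : A.Obj → V) (G : B.Obj → V)
    (hF : IsPresheaf A F) (hG : IsPresheaf B G) :
    (⨅ x : B.Obj ⊕ A.Obj,
        ihom (⨆ b, G b * collHom A B R x (Sum.inl b))
          (⨆ a, F a * collHom A B R x (Sum.inr a))) =
      ⨅ b : B.Obj, ihom (G b) (⨆ a, R b a * F a) := by
  have := isQuantale_of_mul_sSup hV
  exact presheaf_relation_lifting_general hR F G
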